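/- arXiv:1410.5686 — 2 statements merged into one kernel-verified Lean document; each statement's English description precedes it below -/
import Mathlib

section
/- Let V be a compact subset of ℝ with Lebesgue measure λ(V) > 0, let J ≥ 2, and let P be a Borel probability measure on C(V). Then the map x ↦ D_MJ(x,P) is upper semi-continuous on C(V) with respect to the supremum norm. -/
/-!
For fixed `v`, the pairs `(x, y)` such that `x v` lies between `min_k y_k(v)` and `max_k y_k(v)`
form a closed set, because evaluation at `v` is continuous. Hence its indicator is upper
semicontinuous in `(x, y)`, and the reverse Fatou lemma preserves upper semicontinuity when one
integrates it, first over `v` and then over `y`. The semicontinuity in `y` obtained from the first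
integration is what makes the second integrand measurable.
-/

open MeasureTheory Filter Topology

/-- Lebesgue measure on the subtype `V ⊆ ℝ`. -/
noncomputable def lamV (V : Set ℝ) : Measure V :=
  Measure.comap Subtype.val volume

/-- The modified band depth
`D_MJ(x,P) = Σ_{j=2}^{J} ∫ λ{v ∈ V : min_k y_k(v) ≤ x(v) ≤ max_k y_k(v)} dP^{⊗j}(y) / λ(V)`. -/
noncomputable def DMJ {V : Set ℝ} [CompactSpace V] [MeasurableSpace C(V, ℝ)]
    (J : ℕ) (x : C(V, ℝ)) (P : Measure C(V, ℝ)) : ℝ :=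
  ∑ j ∈ Finset.Icc 2 J,
    (∫ y : Fin j → C(V, ℝ),
      (lamV V {v | (⨅ k, y k v) ≤ x v ∧ x v ≤ ⨆ k, y k v}).toReal
      ∂(Measure.pi fun _ : Fin j => P)) / (lamV V Set.univ).toReal

section Integration

variable {X Ω : Type*} [TopologicalSpace X] [MeasurableSpace Ω] {μ : Measure Ω}

theorem upperSemicontinuousAt_lintegral_of_le [FirstCountableTopology X] {f : X → Ω → ENNReal}
    {g : Ω → ENNReal} {x : X} (hf : ∀ z, Measurable (f z)) (hfg : ∀ z, f z ≤ᵐ[μ] g)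
    (hg : ∫⁻ ω, g ω ∂μ ≠ ⊤) (hx : ∀ᵐ ω ∂μ, UpperSemicontinuousAt (fun z => f z ω) x) :
    UpperSemicontinuousAt (fun z => ∫⁻ ω, f z ω ∂μ) x := by
  intro c hc
  by_contra hfreq
  obtain ⟨u, hu, hcu⟩ := exists_seq_forall_of_frequently (not_eventually.mp hfreq)
  have hlimsup : ∀ᵐ ω ∂μ, limsup (fun n => f (u n) ω) atTop ≤ f x ω := by
    filter_upwards [hx] with ω hω
    exact (limsup_le_limsup_of_le hu).trans hω.limsup_le
  refine hc.not_ge ?_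
  calc
    c ≤ limsup (fun n => ∫⁻ ω, f (u n) ω ∂μ) atTop :=
      le_limsup_of_frequently_le (.of_forall fun n => not_lt.mp (hcu n))
    _ ≤ ∫⁻ ω, limsup (fun n => f (u n) ω) atTop ∂μ :=
      limsup_lintegral_le g (fun n => hf (u n)) (fun n => hfg (u n)) hg
    _ ≤ ∫⁻ ω, f x ω ∂μ := lintegral_mono_ae hlimsup

theorem upperSemicontinuous_measure_of_isClosed [FirstCountableTopology X] [IsFiniteMeasure μ]
    {s : X → Set Ω} (hs : ∀ x, MeasurableSet (s x)) (hclosed : ∀ ω, IsClosed {x | ω ∈ s x}) :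
    UpperSemicontinuous fun x => μ (s x) := by
  intro x
  simp only [← lintegral_indicator_one (hs _)]
  exact upperSemicontinuousAt_lintegral_of_le (g := 1)
    (fun z => measurable_one.indicator (hs z))
    (fun z => .of_forall (Set.indicator_le_self' fun _ _ => zero_le))
    (by simp)
    (.of_forall fun ω => (hclosed ω).upperSemicontinuous_indicator zero_le_one x)

theorem upperSemicontinuousAt_ennreal_toReal {f : X → ENNReal} {x : X}
    (hf : UpperSemicontinuousAt f x) (hx : f x ≠ ⊤) :
    UpperSemicontinuousAt (fun z => (f z).toReal) x := fun _ hc =>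
  (hf _ ((ENNReal.lt_ofReal_iff_toReal_lt hx).2 hc)).mono fun _ =>
    ENNReal.toReal_lt_of_lt_ofReal

end Integration

section FiniteExtrema

variable {ι X L : Type*} [Finite ι] [TopologicalSpace X] [ConditionallyCompleteLattice L]
  [TopologicalSpace L]

theorem continuous_ciSup_of_finite [ContinuousSup L] {f : ι → X → L}
    (hf : ∀ i, Continuous (f i)) : Continuous fun x => ⨆ i, f i x := by
  cases nonempty_fintype ι
  cases isEmpty_or_nonempty ι
  · simpa only [iSup_of_empty'] using continuous_const
  · simp only [← Finset.sup'_univ_eq_ciSup]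
    exact Continuous.finset_sup'_apply _ fun i _ => hf i

theorem continuous_ciInf_of_finite [ContinuousInf L] {f : ι → X → L}
    (hf : ∀ i, Continuous (f i)) : Continuous fun x => ⨅ i, f i x :=
  continuous_ciSup_of_finite (L := Lᵒᵈ) hf

end FiniteExtrema

section BandDepth

variable {V ι : Type*} [TopologicalSpace V]

/-- The part of the domain on which `x` runs inside the band spanned by the curves `y k`. -/
def bandSet (x : C(V, ℝ)) (y : ι → C(V, ℝ)) : Set V :=
  {v | ⨅ k, y k v ≤ x v ∧ x v ≤ ⨆ k, y k v}

/-- The modified band depth of `x` with respect to `P`, for curves on an arbitrary space `V` whose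
points are weighted by a nonzero finite measure `μ` (for `μ = 0` the quotient is junk). It is `DMJ`
when `μ` is Lebesgue measure on a compact subset of `ℝ`. -/
noncomputable def modifiedBandDepth [MeasurableSpace V] [MeasurableSpace C(V, ℝ)]
    (μ : Measure V) (P : Measure C(V, ℝ)) (J : ℕ) (x : C(V, ℝ)) : ℝ :=
  ∑ j ∈ Finset.Icc 2 J,
    (∫ y : Fin j → C(V, ℝ), μ.real (bandSet x y) ∂(Measure.pi fun _ => P)) / μ.real Set.univ

theorem isClosed_bandSet [Finite ι] (x : C(V, ℝ)) (y : ι → C(V, ℝ)) : IsClosed (bandSet x y) :=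
  (isClosed_le (continuous_ciInf_of_finite fun k => (y k).continuous) x.continuous).inter
    (isClosed_le x.continuous (continuous_ciSup_of_finite fun k => (y k).continuous))

theorem isClosed_setOf_mem_bandSet [Finite ι] (v : V) :
    IsClosed {p : C(V, ℝ) × (ι → C(V, ℝ)) | v ∈ bandSet p.1 p.2} := by
  have hx : Continuous fun p : C(V, ℝ) × (ι → C(V, ℝ)) => p.1 v := by fun_prop
  have hy (k : ι) : Continuous fun p : C(V, ℝ) × (ι → C(V, ℝ)) => p.2 k v := by fun_prop
  exact (isClosed_le (continuous_ciInf_of_finite hy) hx).inter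
    (isClosed_le hx (continuous_ciSup_of_finite hy))

variable [MeasurableSpace V] [OpensMeasurableSpace V] [SecondCountableTopology C(V, ℝ)]
  (μ : Measure V) [IsFiniteMeasure μ]

theorem upperSemicontinuous_measure_bandSet [Finite ι] :
    UpperSemicontinuous fun p : C(V, ℝ) × (ι → C(V, ℝ)) => μ (bandSet p.1 p.2) :=
  upperSemicontinuous_measure_of_isClosed (fun p => (isClosed_bandSet p.1 p.2).measurableSet)
    isClosed_setOf_mem_bandSet

variable [MeasurableSpace C(V, ℝ)] [BorelSpace C(V, ℝ)]

theorem measurable_measure_bandSet [Finite ι] (x : C(V, ℝ)) :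
    Measurable fun y : ι → C(V, ℝ) => μ (bandSet x y) :=
  ((upperSemicontinuous_measure_bandSet μ).comp
    (continuous_const.prodMk continuous_id)).measurable

theorem upperSemicontinuous_integral_measureReal_bandSet [Finite ι]
    (Q : Measure (ι → C(V, ℝ))) [IsFiniteMeasure Q] :
    UpperSemicontinuous fun x : C(V, ℝ) => ∫ y, μ.real (bandSet x y) ∂Q := by
  intro x
  have hbound (z : C(V, ℝ)) (y : ι → C(V, ℝ)) : μ (bandSet z y) ≤ μ Set.univ :=
    measure_mono (Set.subset_univ _)
  have hconst : ∫⁻ _, μ Set.univ ∂Q ≠ ⊤ := (lintegral_const_lt_top (measure_ne_top μ _)).ne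
  have htoReal (z : C(V, ℝ)) :
      ∫ y, μ.real (bandSet z y) ∂Q = (∫⁻ y, μ (bandSet z y) ∂Q).toReal :=
    integral_toReal (measurable_measure_bandSet μ z).aemeasurable
      (.of_forall fun y => measure_lt_top μ _)
  have husc : UpperSemicontinuousAt (fun z => ∫⁻ y, μ (bandSet z y) ∂Q) x :=
    upperSemicontinuousAt_lintegral_of_le (measurable_measure_bandSet μ)
      (fun z => .of_forall (hbound z)) hconst
      (.of_forall fun y => (upperSemicontinuous_measure_bandSet μ).comp
        (continuous_id.prodMk continuous_const) x)
  simp only [htoReal]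
  exact upperSemicontinuousAt_ennreal_toReal husc
    (ne_top_of_le_ne_top hconst (lintegral_mono (hbound x)))

theorem stmt_9_general [NeZero μ] (P : Measure C(V, ℝ)) [IsFiniteMeasure P] (J : ℕ) :
    UpperSemicontinuous (modifiedBandDepth μ P J) :=
  upperSemicontinuous_sum fun _ _ =>
    (continuous_id.div_const _).comp_upperSemicontinuous
      (upperSemicontinuous_integral_measureReal_bandSet μ _)
      fun _ _ h => div_le_div_of_nonneg_right h measureReal_nonneg

end BandDepth

theorem lamV_univ {V : Set ℝ} (hV : MeasurableSet V) : lamV V Set.univ = volume V :=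
  Measure.Subtype.volume_univ hV.nullMeasurableSet

theorem isFiniteMeasure_lamV {V : Set ℝ} (hV : IsCompact V) : IsFiniteMeasure (lamV V) :=
  ⟨(lamV_univ hV.measurableSet).trans_lt hV.measure_lt_top⟩

theorem neZero_lamV {V : Set ℝ} (hV : MeasurableSet V) (hpos : 0 < volume V) :
    NeZero (lamV V) :=
  ⟨fun h => hpos.ne' <| by rw [← lamV_univ hV, h, Measure.coe_zero, Pi.zero_apply]⟩

/-- For `V` a compact subset of `ℝ` with `λ(V) > 0`, `J ≥ 2`, and `P` a Borel
probability measure on `C(V)`, the modified band depth `x ↦ D_MJ(x, P)` is upper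
semi-continuous w.r.t. the supremum norm. -/
theorem stmt_9 (V : Set ℝ) [CompactSpace V] (hV : IsCompact V)
    (hVpos : 0 < volume V)
    (J : ℕ) (hJ : 2 ≤ J)
    [MeasurableSpace C(V, ℝ)] [BorelSpace C(V, ℝ)]
    (P : Measure C(V, ℝ)) [IsProbabilityMeasure P] :
    ∀ x : C(V, ℝ), ∀ ε > (0 : ℝ), ∃ δ > (0 : ℝ), ∀ y : C(V, ℝ),
      ‖y - x‖ < δ → DMJ J y P ≤ DMJ J x P + ε := by
  intro x ε hε
  have := isFiniteMeasure_lamV hV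
  have := neZero_lamV hV.measurableSet hVpos
  have hlt : ∀ᶠ y in 𝓝 x, DMJ J y P < DMJ J x P + ε :=
    stmt_9_general (lamV V) P J x _ (lt_add_of_pos_right _ hε)
  obtain ⟨δ, hδ, hball⟩ := Metric.eventually_nhds_iff.mp hlt
  exact ⟨δ, hδ, fun y hy => (hball (by rwa [dist_eq_norm])).le⟩
end

section
/- Let V be a nonempty compact subset of ℝ, let α, b ∈ C(V) with α(v) > 0 for all v ∈ V, and let T : C(V) → C(V) be the map T(y)(v) = α(v)y(v) + b(v). Then for every Borel probability measure P on C(V) and every x ∈ C(V), D_HR(T(x), T_*P) = D_HR(x, P), where T_*P is the pushforward of P under T. -/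
open MeasureTheory Filter Topology

/-- The half region depth: the minimum of the probability that `X` lies in the hypograph
of `x` and the probability that `X` lies in the epigraph of `x`. -/
noncomputable def DHR {V : Set ℝ} [CompactSpace V] [MeasurableSpace C(V, ℝ)]
    (x : C(V, ℝ)) (P : Measure C(V, ℝ)) : ℝ :=
  min (P {y | ∀ v, y v ≤ x v}).toReal (P {y | ∀ v, x v ≤ y v}).toReal

section Topology

variable {X R : Type*} [TopologicalSpace X] [TopologicalSpace R] [PartialOrder R]

instance orderClosedTopology_continuousMap [OrderClosedTopology R] :
    OrderClosedTopology C(X, R) where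
  isClosed_le' := by
    simp only [ContinuousMap.le_def, Set.ofPred_forall]
    exact isClosed_iInter fun v => isClosed_le (by fun_prop) (by fun_prop)

theorem continuousMap_mul_add_le_mul_add_iff [NonUnitalNonAssocSemiring R] [IsTopologicalSemiring R]
    [IsOrderedCancelAddMonoid R] [PosMulMono R] [PosMulReflectLE R] {a b f g : C(X, R)}
    (ha : ∀ v, 0 < a v) : a * f + b ≤ a * g + b ↔ f ≤ g :=
  forall_congr' fun v => (add_le_add_iff_right (b v)).trans (mul_le_mul_iff_right₀ (ha v))

end Topology

section Measure

variable {E F : Type*} [MeasurableSpace E] [Preorder E] [TopologicalSpace F] [MeasurableSpace F]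
  [OpensMeasurableSpace F] [Preorder F] {P : Measure E} (f : E ↪o F)

theorem measureReal_map_orderEmbedding_Iic [ClosedIicTopology F] (hf : AEMeasurable f P) (x : E) :
    (P.map f).real (Set.Iic (f x)) = P.real (Set.Iic x) := by
  rw [map_measureReal_apply_of_aemeasurable hf measurableSet_Iic, f.preimage_Iic]

theorem measureReal_map_orderEmbedding_Ici [ClosedIciTopology F] (hf : AEMeasurable f P) (x : E) :
    (P.map f).real (Set.Ici (f x)) = P.real (Set.Ici x) := by
  rw [map_measureReal_apply_of_aemeasurable hf measurableSet_Ici, f.preimage_Ici]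

end Measure

theorem DHR_eq_min_measureReal {V : Set ℝ} [CompactSpace V] [MeasurableSpace C(V, ℝ)]
    (x : C(V, ℝ)) (P : Measure C(V, ℝ)) :
    DHR x P = min (P.real (Set.Iic x)) (P.real (Set.Ici x)) :=
  rfl

theorem stmt_10_general {V W : Set ℝ} [CompactSpace V] [CompactSpace W]
    [MeasurableSpace C(V, ℝ)] [MeasurableSpace C(W, ℝ)] [OpensMeasurableSpace C(W, ℝ)]
    (T : C(V, ℝ) ↪o C(W, ℝ)) {P : Measure C(V, ℝ)} (hT : AEMeasurable T P) (x : C(V, ℝ)) :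
    DHR (T x) (P.map T) = DHR x P := by
  rw [DHR_eq_min_measureReal, DHR_eq_min_measureReal,
    measureReal_map_orderEmbedding_Iic T hT, measureReal_map_orderEmbedding_Ici T hT]

/-- The half region depth is invariant under the transformation
`T(y) = α·y + b` with `α(v) > 0` for all `v`: `D_HR(T x, T_*P) = D_HR(x, P)`. -/
theorem stmt_10 (V : Set ℝ) [CompactSpace V] (hV : IsCompact V) (hne : V.Nonempty)
    [MeasurableSpace C(V, ℝ)] [BorelSpace C(V, ℝ)]
    (α b : C(V, ℝ)) (hα : ∀ v, 0 < α v)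
    (P : Measure C(V, ℝ)) [IsProbabilityMeasure P] (x : C(V, ℝ)) :
    DHR (α * x + b) (P.map fun y => α * y + b) = DHR x P :=
  stmt_10_general
    (OrderEmbedding.ofMapLEIff _ fun _ _ => continuousMap_mul_add_le_mul_add_iff hα)
    (Continuous.aemeasurable (by fun_prop : Continuous fun y : C(V, ℝ) => α * y + b)) x
end
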